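/- For all positive integers ℓ and m, the number of spanning trees of the rectangular grid graph satisfies τ(ℓ,m) = ∏_{j=1}^{ℓ-1} ∏_{k=1}^{m-1} (λ_j(ℓ) + λ_k(m)), where the product is interpreted as the empty product (equal to 1) when ℓ = 1 or m = 1. -/

import Mathlib

open Real Finset

/-- The rectangular grid graph `R_{ℓ,m}`: the box (Cartesian) product of the path
graphs on `ℓ` and `m` vertices. -/
def gridGraph (l m : ℕ) : SimpleGraph (Fin l × Fin m) :=
  (SimpleGraph.pathGraph l).boxProd (SimpleGraph.pathGraph m)

/-- `gridTau l m` is the number of spanning trees of the `l × m` rectangular grid graph,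
i.e. the number of spanning subgraphs of `gridGraph l m` that are trees. -/
noncomputable def gridTau (l m : ℕ) : ℕ :=
  Set.ncard {H : (gridGraph l m).Subgraph | H.IsSpanning ∧ H.coe.IsTree}

/-- `pathEig r j = λ_j(r) = 2 - 2 cos (π j / r)`. -/
noncomputable def pathEig (r j : ℕ) : ℝ := 2 - 2 * Real.cos (π * j / r)

section MatrixTree

/-- the orbit of `v` under `f` stops at the fixed point `r`. -/
def StopsAt {V : Type*} (r : V) (f : V → V) (v : V) : Prop := ∃ k : ℕ, f^[k] v = r ∧ f^[k + 1] v = r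

lemma term_iff {V : Type*} (r : V) (f : V → V) (v : V) : StopsAt r f v ↔ StopsAt r f (f v) := by
  constructor
  · rintro ⟨k, h1, h2⟩
    rcases k with _ | k
    · refine ⟨0, ?_⟩
      simp only [Function.iterate_zero, id, zero_add, Function.iterate_one] at *
      subst h1
      exact ⟨h2, by rw [h2, h2]⟩
    · exact ⟨k, by simpa [Function.iterate_succ_apply] using h1,
        by simpa [Function.iterate_succ_apply] using h2⟩
  · rintro ⟨k, h1, h2⟩
    exact ⟨k + 1, by simpa [Function.iterate_succ_apply] using h1,
        by simpa [Function.iterate_succ_apply] using h2⟩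

variable {V : Type*} [Fintype V] [DecidableEq V]

/-- the functional matrix of `f`, with the loop at `r` deleted. -/
def funMat (r : V) (f : V → V) : Matrix V V ℝ :=
  fun v u => if v = r ∧ f v = r then 0 else if f v = u then 1 else 0

lemma funMat_mulVec (r : V) (f : V → V) (x : V → ℝ) (v : V) :
    (funMat r f).mulVec x v = if v = r ∧ f v = r then 0 else x (f v) := by
  simp only [Matrix.mulVec, dotProduct, funMat]
  split_ifs <;> simp

lemma funMat_pow (r : V) (f : V → V) (x : V → ℝ) (k : ℕ) : ∀ v : V,
    (∃ j < k, f^[j] v = r ∧ f^[j + 1] v = r) → ((funMat r f) ^ k).mulVec x v = 0 := by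
  induction k with
  | zero => rintro v ⟨j, hj, _⟩; omega
  | succ k ih =>
    rintro v ⟨j, hj, h1, h2⟩
    rw [pow_succ', ← Matrix.mulVec_mulVec, funMat_mulVec]
    split_ifs with h
    · rfl
    · rcases j with _ | j
      · exact absurd ⟨h1, h2⟩ h
      · exact ih _ ⟨j, by omega, by simpa [Function.iterate_succ_apply] using h1,
          by simpa [Function.iterate_succ_apply] using h2⟩

open Classical in
lemma det_funMat (r : V) (f : V → V) :
    (1 - funMat r f).det = if ∀ v, StopsAt r f v then 1 else 0 := by
  split_ifs with h
  · have hn : IsNilpotent (funMat r f) := by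
      choose k hk using h
      refine ⟨univ.sup k + 1, ?_⟩
      apply Matrix.ext_of_mulVec_single
      intro i
      ext v
      rw [funMat_pow r f _ _ v ⟨k v, Nat.lt_succ_of_le (Finset.le_sup (mem_univ v)), hk v⟩]
      simp
    have h1 := Matrix.isNilpotent_charpoly_sub_pow_of_isNilpotent hn
    have h2 : (funMat r f).charpoly = Polynomial.X ^ (Fintype.card V) :=
      sub_eq_zero.1 h1.eq_zero
    have h3 := Matrix.eval_charpoly (funMat r f) 1
    rw [h2] at h3
    simpa using h3.symm
  · push Not at h
    obtain ⟨v, hv⟩ := h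
    rw [← Matrix.exists_mulVec_eq_zero_iff]
    refine ⟨fun u => if StopsAt r f u then 0 else 1, fun h0 => ?_, ?_⟩
    · have := congrFun h0 v
      simp [hv] at this
    · ext u
      rw [Matrix.sub_mulVec, Pi.sub_apply, funMat_mulVec, Matrix.one_mulVec]
      rw [← term_iff]
      by_cases hu : u = r ∧ f u = r
      · have : StopsAt r f u := ⟨0, by simpa using hu⟩
        simp [this]
      · simp [hu]

variable (G : SimpleGraph V) [DecidableRel G.Adj]

/-- The admissible parent maps. -/
def parents (r : V) (v : V) : Finset V := univ.filter fun u => G.Adj v u ∨ (v = r ∧ u = r)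

open Classical in
lemma det_lap_add (r : V) :
    (G.lapMatrix ℝ + Matrix.single r r 1).det =
      (((Fintype.piFinset (parents G r)).filter fun f => ∀ v, StopsAt r f v).card : ℝ) := by
  have key : G.lapMatrix ℝ + Matrix.single r r 1 = Matrix.of (fun v => ∑ u ∈ parents G r v,
      fun w => (1 : Matrix V V ℝ) v w - if v = r ∧ u = r then 0 else if u = w then (1:ℝ) else 0) := by
    ext v w
    rw [Matrix.of_apply, Finset.sum_apply, parents, Finset.sum_filter]
    have h1 : ∀ u, (if G.Adj v u ∨ v = r ∧ u = r then
        (1 : Matrix V V ℝ) v w - (if v = r ∧ u = r then 0 else if u = w then (1:ℝ) else 0) else 0)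
        = (if G.Adj v u then (1 : Matrix V V ℝ) v w else 0)
          - (if u = w then (if G.Adj v w then 1 else 0) else 0)
          + (if u = r then (if v = r then (1 : Matrix V V ℝ) v w else 0) else 0) := by
      intro u
      by_cases ha : v = r ∧ u = r
      · obtain ⟨rfl, rfl⟩ := ha
        simp
        intro h; subst h; simp
      · by_cases hb : G.Adj v u
        · have : ¬ (u = r ∧ v = r) := by tauto
          by_cases hu : u = w
          · subst hu; simp [ha, hb, ← ite_and, this]
          · simp [ha, hb, ← ite_and, this, hu]
        · have : ¬ (u = r ∧ v = r) := by tauto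
          by_cases hu : u = w
          · subst hu; simp [ha, hb, ← ite_and, this]
          · simp [ha, hb, ← ite_and, this, hu]
    rw [Finset.sum_congr rfl (fun u _ => h1 u)]
    rw [Finset.sum_add_distrib, Finset.sum_sub_distrib, Finset.sum_ite_eq', Finset.sum_ite_eq']
    simp only [mem_univ, if_true, SimpleGraph.lapMatrix, SimpleGraph.degMatrix, Matrix.add_apply,
      Matrix.sub_apply, SimpleGraph.adjMatrix_apply, Matrix.diagonal_apply,
      Matrix.single_apply, Matrix.one_apply]
    by_cases h : v = w
    · subst h
      have hd := SimpleGraph.degree_eq_sum_if_adj (R := ℝ) G v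
      simp only [if_true, SimpleGraph.irrefl, if_false, hd]
      simp [eq_comm]
    · simp [h]
      intro h1 h2; exact absurd (h1.symm.trans h2) h
  rw [key]
  have := (Matrix.detRowAlternating (n := V) (R := ℝ)).toMultilinearMap.map_sum_finset
    (fun v u w => (1 : Matrix V V ℝ) v w - if v = r ∧ u = r then 0 else if u = w then (1:ℝ) else 0)
    (parents G r)
  refine this.trans ?_
  rw [Finset.card_filter]
  push_cast
  refine Finset.sum_congr rfl fun f _ => ?_
  exact det_funMat r f

lemma det_lap_add_one (r : V) :
    (G.lapMatrix ℝ + Matrix.of fun _ _ => 1).det =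
      (Fintype.card V : ℝ) ^ 2 * (G.lapMatrix ℝ + Matrix.single r r 1).det := by
  set L := G.lapMatrix ℝ with hL
  have hL1 : L.mulVec (fun _ => 1) = 0 := G.lapMatrix_mulVec_const_eq_zero
  have hsym : L.transpose = L := G.isSymm_lapMatrix ℝ
  let u : V → ℝ := (fun _ => 1) - Pi.single r 1
  let A : Matrix V V ℝ := 1 + Matrix.vecMulVec u (fun _ => 1)
  have hA : A.det = Fintype.card V := by
    simp only [A]
    rw [Matrix.vecMulVec_eq Unit, Matrix.det_one_add_replicateCol_mul_replicateRow]
    simp [u, dotProduct]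
  have hK : L + Matrix.single r r 1 = L + Matrix.vecMulVec (Pi.single r 1) (Pi.single r 1) := by
    rw [Matrix.single_eq_single_vecMulVec_single]
  have hvL : Matrix.vecMul (fun _ => 1) L = 0 := by
    rw [← Matrix.mulVec_transpose, hsym, hL1]
  have hfac : L + Matrix.of (fun _ _ => 1) = A * (L + Matrix.single r r 1) * A.transpose := by
    have h1 : A * (L + Matrix.single r r 1) = L + Matrix.vecMulVec (fun _ => 1) (Pi.single r 1) := by
      rw [hK]
      simp only [A, add_mul, one_mul, mul_add, Matrix.vecMulVec_mul, hvL]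
      simp [u, Matrix.sub_vecMulVec]
      ext i j
      simp [Matrix.vecMulVec_apply, Matrix.vecMul, dotProduct, Pi.single_apply]
    rw [h1]
    simp only [A, Matrix.transpose_add, Matrix.transpose_one, Matrix.transpose_vecMulVec, mul_add,
      add_mul, mul_one, Matrix.mul_vecMulVec, hL1]
    simp [u, Matrix.vecMulVec_sub]
    ext i j
    simp [Matrix.vecMulVec_apply, Matrix.mulVec, dotProduct, Pi.single_apply]
  rw [hfac, Matrix.det_mul, Matrix.det_mul, Matrix.det_transpose, hA]
  ring

end MatrixTree
section Trees
variable {V : Type*}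

/-- The graph with edges `{v, f v}`. -/
def treeOf (f : V → V) : SimpleGraph V := SimpleGraph.fromRel fun v u => f v = u

lemma treeOf_adj (f : V → V) (v u : V) : (treeOf f).Adj v u ↔ v ≠ u ∧ (f v = u ∨ f u = v) := by
  simp [treeOf, SimpleGraph.fromRel_adj]

lemma term_root {r : V} {f : V → V} {v : V} (h : StopsAt r f v) : f r = r := by
  obtain ⟨k, h1, h2⟩ := h
  rwa [Function.iterate_succ_apply', h1] at h2

lemma treeOf_reach (f : V → V) (v : V) (k : ℕ) : (treeOf f).Reachable v (f^[k] v) := by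
  induction k with
  | zero => simp
  | succ k ih =>
    refine ih.trans ?_
    rw [Function.iterate_succ_apply']
    by_cases h : f^[k] v = f (f^[k] v)
    · rw [← h]
    · exact SimpleGraph.Adj.reachable ((treeOf_adj _ _ _).2 ⟨h, Or.inl rfl⟩)

lemma treeOf_connected {r : V} {f : V → V} (h : ∀ v, StopsAt r f v) : (treeOf f).Connected := by
  have : ∀ v, (treeOf f).Reachable v r := by
    intro v
    obtain ⟨k, hk, _⟩ := h v
    rw [← hk]; exact treeOf_reach f v k
  have hne : Nonempty V := ⟨r⟩
  exact ⟨fun u v => (this u).trans (this v).symm⟩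

lemma treeOf_isTree [Finite V] {r : V} {f : V → V} (h : ∀ v, StopsAt r f v) : (treeOf f).IsTree := by
  have := Fintype.ofFinite V
  classical
  have hc := treeOf_connected h
  rw [SimpleGraph.isTree_iff_connected_and_card]
  refine ⟨hc, le_antisymm ?_ hc.card_vert_le_card_edgeSet_add_one⟩
  have hsub : (treeOf f).edgeSet ⊆ (((univ.erase r).image fun v => s(v, f v) : Finset (Sym2 V)) : Set (Sym2 V)) := by
    intro e
    induction e with
    | _ a b =>
    rw [SimpleGraph.mem_edgeSet, treeOf_adj]
    have hr := term_root (h r)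
    rintro ⟨hne, h1 | h1⟩
    · simp only [coe_image, Set.mem_image, mem_coe, mem_erase, mem_univ, and_true]
      refine ⟨a, ?_, by rw [h1]⟩
      rintro rfl; exact hne (hr.symm.trans h1)
    · simp only [coe_image, Set.mem_image, mem_coe, mem_erase, mem_univ, and_true]
      refine ⟨b, ?_, by rw [h1, Sym2.eq_swap]⟩
      rintro rfl; exact hne (h1.symm.trans hr)
  have h1 : Nat.card (treeOf f).edgeSet ≤ (univ.erase r).card := by
    rw [Nat.card_coe_set_eq]
    refine (Set.ncard_le_ncard hsub (Finset.finite_toSet _)).trans ?_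
    rw [Set.ncard_coe_finset]
    exact Finset.card_image_le
  rw [Finset.card_erase_of_mem (mem_univ r), Finset.card_univ] at h1
  have : 0 < Fintype.card V := Fintype.card_pos_iff.2 ⟨r⟩
  rw [Nat.card_eq_fintype_card (α := V)]
  omega

lemma treeOf_inj {r : V} {f g : V → V} (hf : ∀ v, StopsAt r f v) (hg : ∀ v, StopsAt r g v)
    (h : treeOf f = treeOf g) : f = g := by
  have fr := term_root (hf r)
  have gr := term_root (hg r)
  -- f has no 2-cycles
  have no2 : ∀ v, f (f v) = v → v = r := by
    intro v hv
    obtain ⟨k, h1, h2⟩ := hf v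
    have hp : ∀ k, f^[k] v = v ∨ f^[k] v = f v := by
      intro k
      induction k with
      | zero => simp
      | succ k ih =>
        rw [Function.iterate_succ_apply']
        rcases ih with h | h <;> rw [h] <;> simp [hv]
    rcases hp k with h3 | h3
    · rw [← h3, h1]
    · rw [h1] at h3; rw [← hv, ← h3, fr]
  have step : ∀ v, f v ≠ g v → f (f v) ≠ g (f v) := by
    intro v hv h1
    have hvr : v ≠ r := by rintro rfl; exact hv (fr.trans gr.symm)
    have hne : v ≠ f v := by
      intro h2
      exact hvr (no2 v (by rw [← h2, ← h2]))
    have hadj : (treeOf f).Adj v (f v) := (treeOf_adj _ _ _).2 ⟨hne, Or.inl rfl⟩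
    rw [h, treeOf_adj] at hadj
    rcases hadj.2 with h3 | h3
    · exact hv h3.symm
    · exact hvr (no2 v (h1.trans h3))
  by_contra hne
  obtain ⟨v, hv⟩ := Function.ne_iff.1 hne
  obtain ⟨k, h1, _⟩ := hf v
  have : ∀ k, f (f^[k] v) ≠ g (f^[k] v) := by
    intro k
    induction k with
    | zero => exact hv
    | succ k ih => rw [Function.iterate_succ_apply']; exact step _ ih
  exact this k (by rw [h1, fr, gr])

lemma exists_closer {T : SimpleGraph V} (hT : T.Connected) (r v : V) (hv : v ≠ r) :
    ∃ u, T.Adj v u ∧ T.dist u r < T.dist v r := by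
  obtain ⟨p, hp⟩ := hT.exists_walk_length_eq_dist v r
  cases p with
  | nil => exact absurd rfl hv
  | @cons _ u _ h q =>
    refine ⟨u, h, ?_⟩
    have := SimpleGraph.dist_le q
    simp at hp
    omega

lemma exists_treeOf (r : V) {T : SimpleGraph V} (hT : T.IsTree) :
    ∃ f : V → V, (∀ v, StopsAt r f v) ∧ (∀ v, T.Adj v (f v) ∨ (v = r ∧ f v = r)) ∧ treeOf f = T := by
  classical
  have hc := hT.connected
  choose! p hp1 hp2 using exists_closer hc r
  let f : V → V := fun v => if v = r then r else p v
  have fr : f r = r := by simp [f]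
  have fv : ∀ v, v ≠ r → f v = p v := fun v hv => by simp [f, hv]
  have ht : ∀ n, ∀ v, T.dist v r ≤ n → StopsAt r f v := by
    intro n
    induction n with
    | zero =>
      intro v hv
      have : v = r := by
        by_contra hne
        have := hp2 v hne; omega
      subst this
      exact ⟨0, by simp [fr]⟩
    | succ n ih =>
      intro v hv
      by_cases hne : v = r
      · subst hne
        exact ⟨0, by simp [fr]⟩
      · rw [term_iff]
        apply ih
        rw [fv v hne]
        have := hp2 v hne; omega
  have ht' : ∀ v, StopsAt r f v := fun v => ht _ v le_rfl
  refine ⟨f, ht', fun v => ?_, ?_⟩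
  · by_cases hne : v = r
    · right; exact ⟨hne, by rw [hne, fr]⟩
    · left; rw [fv v hne]; exact hp1 v hne
  · have hle : treeOf f ≤ T := by
      have aux : ∀ a b, a ≠ b → f a = b → T.Adj a b := by
        intro a b hab h
        have har : a ≠ r := by rintro rfl; exact hab (fr.symm.trans h)
        rw [← h, fv a har]; exact hp1 a har
      intro a b hab
      rw [treeOf_adj] at hab
      rcases hab.2 with h | h
      · exact aux a b hab.1 h
      · exact (aux b a hab.1.symm h).symm
    have hmin := SimpleGraph.isTree_iff_minimal_connected.1 hT
    exact le_antisymm hle (hmin.2 (treeOf_connected ht') hle)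

open Classical in
lemma ncard_trees [Fintype V] [DecidableEq V] (G : SimpleGraph V) [DecidableRel G.Adj] (r : V) :
    Set.ncard {H : G.Subgraph | H.IsSpanning ∧ H.coe.IsTree} =
      ((Fintype.piFinset (parents G r)).filter fun f => ∀ v, StopsAt r f v).card := by
  rw [← Set.ncard_coe_finset]
  have h1 : Set.ncard {H : G.Subgraph | H.IsSpanning ∧ H.coe.IsTree} =
      Set.ncard {T : SimpleGraph V | T ≤ G ∧ T.IsTree} := by
    refine Set.ncard_congr (fun H _ => H.spanningCoe) ?_ ?_ ?_
    · rintro H ⟨hs, ht⟩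
      exact ⟨H.spanningCoe_le, (H.spanningCoeEquivCoeOfSpanning hs).isTree_iff.2 ht⟩
    · rintro H H' ⟨hs, _⟩ ⟨hs', _⟩ h
      refine SimpleGraph.Subgraph.ext ?_ (SimpleGraph.Subgraph.spanningCoe_inj.1 h)
      rw [SimpleGraph.Subgraph.isSpanning_iff.1 hs, SimpleGraph.Subgraph.isSpanning_iff.1 hs']
    · rintro T ⟨hle, ht⟩
      have hs : (SimpleGraph.toSubgraph T hle).IsSpanning := SimpleGraph.toSubgraph.isSpanning T hle
      have he : (SimpleGraph.toSubgraph T hle).spanningCoe = T := by ext; simp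
      refine ⟨SimpleGraph.toSubgraph T hle, ⟨hs, ?_⟩, he⟩
      rw [← (SimpleGraph.Subgraph.spanningCoeEquivCoeOfSpanning _ hs).isTree_iff, he]
      exact ht
  rw [h1]
  symm
  refine Set.ncard_congr (fun f _ => treeOf f) ?_ ?_ ?_
  · intro f hf
    simp only [coe_filter, Set.mem_ofPred_eq, Fintype.mem_piFinset, parents, mem_filter, mem_univ,
      true_and] at hf
    refine ⟨?_, treeOf_isTree hf.2⟩
    have aux : ∀ a b, a ≠ b → f a = b → G.Adj a b := by
      intro a b hab h
      rcases hf.1 a with h1 | h1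
      · rwa [h] at h1
      · exact absurd (h1.1.trans (h1.2.symm.trans h)) hab
    intro a b hab
    rw [treeOf_adj] at hab
    rcases hab.2 with h | h
    · exact aux a b hab.1 h
    · exact (aux b a hab.1.symm h).symm
  · intro f g hf hg h
    simp only [coe_filter, Set.mem_ofPred_eq] at hf hg
    exact treeOf_inj hf.2 hg.2 h
  · rintro T ⟨hle, hT⟩
    obtain ⟨f, h1, h2, h3⟩ := exists_treeOf r hT
    refine ⟨f, ?_, h3⟩
    simp only [coe_filter, Set.mem_ofPred_eq, Fintype.mem_piFinset, parents, mem_filter, mem_univ,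
      true_and]
    exact ⟨fun v => (h2 v).imp (fun h => hle h) id, h1⟩

end Trees

lemma prod_pathEig0 (n : ℕ) : ∏ j ∈ Finset.range n, pathEig (n + 1) (j + 1) = ((n + 1 : ℕ) : ℝ) := by
  have h1 := Polynomial.Chebyshev.roots_U_real n
  have h2 := Polynomial.Chebyshev.leadingCoeff_U_natCast ℝ n
  have h3 := Polynomial.Chebyshev.U_eval_one (R := ℝ) n
  have hinj : Set.InjOn (fun k : ℕ => cos (((k:ℝ) + 1) * π / ((n:ℝ) + 1))) (Finset.range n) :=
    (Finset.range n).nodup_map_iff_injOn.mp (Polynomial.Chebyshev.roots_U_real_nodup n)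
  have h4 := Polynomial.C_leadingCoeff_mul_prod_multiset_X_sub_C
    (p := Polynomial.Chebyshev.U ℝ n) (by
      rw [h1, Polynomial.Chebyshev.natDegree_U_natCast, Finset.card_val,
        Finset.card_image_of_injOn hinj, Finset.card_range])
  rw [← h4, h1, h2] at h3
  have h5 : (Multiset.map (fun a : ℝ => Polynomial.X - Polynomial.C a)
     (image (fun k : ℕ => cos (((k:ℝ) + 1) * π / ((n:ℝ) + 1))) (range n)).val).prod =
      ∏ k ∈ range n, (Polynomial.X - Polynomial.C (cos (((k:ℝ) + 1) * π / ((n:ℝ) + 1)))) :=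
    Finset.prod_image (f := fun a : ℝ => Polynomial.X - Polynomial.C a) hinj
  rw [h5, Polynomial.eval_mul, Polynomial.eval_C, Polynomial.eval_prod] at h3
  push_cast at h3 ⊢
  rw [← h3]
  conv_rhs => rw [← Finset.card_range n, ← Finset.prod_const, Finset.card_range, ← Finset.prod_mul_distrib]
  refine Finset.prod_congr rfl fun k _ => ?_
  simp only [pathEig, Polynomial.eval_sub, Polynomial.eval_X, Polynomial.eval_C]
  push_cast
  rw [mul_comm π]
  ring

/-- cosine eigenvectors of the path -/
noncomputable def pathVec (l j a : ℕ) : ℝ := cos (π * j / l * (a + 1 / 2))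

lemma pathEig_inj (l : ℕ) : Function.Injective (fun j : Fin l => pathEig l j) := by
  intro i j h
  have hl : 0 < (l:ℝ) := by exact_mod_cast i.pos
  have hmem : ∀ i : Fin l, π * (i:ℕ) / l ∈ Set.Icc 0 π := by
    intro i
    refine ⟨by positivity, ?_⟩
    rw [div_le_iff₀ hl]
    have : ((i:ℕ):ℝ) ≤ l := by exact_mod_cast i.2.le
    exact mul_le_mul_of_nonneg_left this pi_pos.le
  have h' : cos (π * (i:ℕ) / l) = cos (π * (j:ℕ) / l) := by
    simp only [pathEig] at h; linarith
  have := Real.injOn_cos (hmem i) (hmem j) h'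
  field_simp at this
  ext; exact_mod_cast this

lemma path_lap (l : ℕ) [DecidableRel (SimpleGraph.pathGraph l).Adj] (j : ℕ) (a : Fin l) :
    ∑ u : Fin l, (if (SimpleGraph.pathGraph l).Adj a u then pathVec l j a - pathVec l j u else 0)
      = pathEig l j * pathVec l j a := by
  have hl : (l:ℝ) ≠ 0 := by exact_mod_cast a.pos.ne'
  obtain ⟨a, ha⟩ := a
  simp only [SimpleGraph.pathGraph_adj]
  rw [Fin.sum_univ_eq_sum_range
    (fun u : ℕ => if a + 1 = u ∨ u + 1 = a then pathVec l j a - pathVec l j u else 0) l]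
  have h1 : ∀ u, (if a + 1 = u ∨ u + 1 = a then pathVec l j a - pathVec l j u else 0)
      = (if a + 1 = u then pathVec l j a - pathVec l j u else 0) +
        (if u + 1 = a then pathVec l j a - pathVec l j u else 0) := by
    intro u
    by_cases h : a + 1 = u
    · have : ¬ (u + 1 = a) := by omega
      simp [h, this]
    · simp [h]
  rw [Finset.sum_congr rfl (fun u _ => h1 u), Finset.sum_add_distrib, Finset.sum_ite_eq]
  set θ := π * j / l with hθ
  have hA : (if a + 1 ∈ range l then pathVec l j a - pathVec l j (a + 1) else 0) =
      cos (θ * (a + 1/2)) - cos (θ * (a + 1/2) + θ) := by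
    split_ifs with h
    · simp only [pathVec, ← hθ]; push_cast; congr 2; ring
    · have : l = a + 1 := by simp at h; omega
      have hs : θ * (a + 1) = j * π := by
        have : (l:ℝ) = a + 1 := by exact_mod_cast this
        rw [← this, hθ]; field_simp
      have e1 : θ * (a + 1/2) = j * π - θ / 2 := by rw [← hs]; ring
      have e2 : θ * (a + 1/2) + θ = j * π + θ / 2 := by rw [← hs]; ring
      rw [e2, e1, cos_add, cos_sub, sin_nat_mul_pi]; ring
  have hB : ∑ u ∈ range l, (if u + 1 = a then pathVec l j a - pathVec l j u else 0) =
      cos (θ * (a + 1/2)) - cos (θ * (a + 1/2) - θ) := by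
    rcases a with _ | a
    · simp
      rw [← cos_neg]; ring_nf
    · simp only [Nat.add_right_cancel_iff]
      rw [Finset.sum_ite_eq', if_pos (by simp; omega)]
      simp only [pathVec, ← hθ]; push_cast; congr 2; ring
  rw [hA, hB, cos_add, cos_sub]
  simp only [pathEig, pathVec, ← hθ]
  ring

lemma lap_mulVec {V : Type*} [Fintype V] [DecidableEq V] (G : SimpleGraph V) [DecidableRel G.Adj]
    (x : V → ℝ) (v : V) : (G.lapMatrix ℝ).mulVec x v = ∑ u, if G.Adj v u then x v - x u else 0 := by
  rw [SimpleGraph.lapMatrix_mulVec_apply, SimpleGraph.degree_eq_sum_if_adj,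
    SimpleGraph.neighborFinset_eq_filter, Finset.sum_filter, Finset.sum_mul,
    ← Finset.sum_sub_distrib]
  refine Finset.sum_congr rfl fun u _ => ?_
  split_ifs <;> simp

noncomputable def pathU (l : ℕ) : Matrix (Fin l) (Fin l) ℝ := fun a j => pathVec l j a

lemma pathVec_zero_ne (l j : ℕ) (h : j < l) : pathVec l j 0 ≠ 0 := by
  have hl : 0 < (l:ℝ) := by exact_mod_cast (by omega : 0 < l)
  apply ne_of_gt
  apply cos_pos_of_mem_Ioo
  have h1 : (j:ℝ) / l < 1 := by rw [div_lt_one hl]; exact_mod_cast h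
  have h0 : 0 ≤ (j:ℝ) / l := by positivity
  rw [mul_div_assoc]
  constructor <;> push_cast <;> nlinarith [pi_pos, mul_nonneg pi_pos.le h0, mul_lt_mul_of_pos_left h1 pi_pos]

lemma pathU_det (l : ℕ) : (pathU l).det ≠ 0 := by
  classical
  have : LinearIndependent ℝ (pathU l).col := by
    refine Module.End.eigenvectors_linearIndependent'
      (Matrix.toLin' ((SimpleGraph.pathGraph l).lapMatrix ℝ)) (fun j : Fin l => pathEig l j)
      (pathEig_inj l) _ fun j => ?_
    refine ⟨?_, ?_⟩
    · rw [Module.End.mem_eigenspace_iff]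
      ext a
      rw [Matrix.toLin'_apply, lap_mulVec]
      exact path_lap l j a
    · intro h
      exact pathVec_zero_ne l j j.2 (congrFun h ⟨0, j.pos⟩)
  rw [Matrix.linearIndependent_cols_iff_isUnit, Matrix.isUnit_iff_isUnit_det] at this
  exact this.ne_zero

lemma pathVec_sum (l : ℕ) (j : Fin l) :
    ∑ a : Fin l, pathVec l j a = if (j:ℕ) = 0 then (l:ℝ) else 0 := by
  classical
  split_ifs with h
  · simp [pathVec, h]
  · have h1 : ∑ a : Fin l, pathEig l j * pathVec l j a = 0 := by
      have := fun a => path_lap l j a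
      rw [← Finset.sum_congr rfl (fun a _ => this a)]
      have e : ∀ S : ℝ, S = - S → S = 0 := fun S h => by linarith
      apply e
      conv_lhs => rw [Finset.sum_comm]
      rw [← Finset.sum_neg_distrib]
      refine Finset.sum_congr rfl fun u _ => ?_
      rw [← Finset.sum_neg_distrib]
      refine Finset.sum_congr rfl fun v _ => ?_
      rw [SimpleGraph.adj_comm]
      split_ifs <;> simp
    rw [← Finset.mul_sum] at h1
    rcases mul_eq_zero.1 h1 with h2 | h2
    · exfalso
      have : (j : ℕ) = ((⟨0, j.pos⟩ : Fin l) : ℕ) := congrArg _ (pathEig_inj l (a₁ := j) (a₂ := ⟨0, j.pos⟩)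
        (by simp only [h2]; simp [pathEig]))
      exact h this
    · exact h2

lemma grid_lap {l m : ℕ} (G : SimpleGraph (Fin l)) (H : SimpleGraph (Fin m))
    [DecidableRel G.Adj] [DecidableRel H.Adj] [DecidableRel (G.boxProd H).Adj]
    (p : Fin l → ℝ) (q : Fin m → ℝ) (a : Fin l) (b : Fin m) :
    ∑ u : Fin l × Fin m, (if (G.boxProd H).Adj (a, b) u then p a * q b - p u.1 * q u.2 else 0) =
      (∑ u, if G.Adj a u then p a - p u else 0) * q b
        + p a * (∑ u, if H.Adj b u then q b - q u else 0) := by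
  have h1 : ∀ u : Fin l × Fin m,
      (if (G.boxProd H).Adj (a, b) u then p a * q b - p u.1 * q u.2 else 0) =
      (if b = u.2 then (if G.Adj a u.1 then p a - p u.1 else 0) * q b else 0) +
      (if a = u.1 then p a * (if H.Adj b u.2 then q b - q u.2 else 0) else 0) := by
    rintro ⟨x, y⟩
    simp only [SimpleGraph.boxProd_adj]
    by_cases hx : a = x
    · subst hx
      by_cases hy : b = y
      · subst hy; simp
      · simp only [SimpleGraph.irrefl, hy, false_and, and_true, false_or, if_false, if_true]
        split_ifs <;> ring
    · by_cases hy : b = y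
      · subst hy
        simp only [SimpleGraph.irrefl, hx, false_and, and_true, or_false, if_false, if_true]
        split_ifs <;> ring
      · simp [hx, hy]
  rw [Finset.sum_congr rfl (fun u _ => h1 u), Finset.sum_add_distrib, Fintype.sum_prod_type,
    Fintype.sum_prod_type_right, Finset.sum_mul, Finset.mul_sum]
  simp

/-- the eigenvalues of the Laplacian plus the all ones matrix. -/
noncomputable def gridEig (l m : ℕ) (x : Fin l × Fin m) : ℝ :=
  pathEig l x.1 + pathEig m x.2 + if (x.1 : ℕ) = 0 ∧ (x.2 : ℕ) = 0 then (l * m : ℝ) else 0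

open Classical in
lemma det_grid (l m : ℕ) :
    ((gridGraph l m).lapMatrix ℝ + Matrix.of fun _ _ => 1).det = ∏ x, gridEig l m x := by
  set U := Matrix.kroneckerMap (fun x1 x2 : ℝ => x1 * x2) (pathU l) (pathU m) with hU
  have hdet : U.det ≠ 0 := by
    rw [hU, Matrix.det_kronecker]
    exact mul_ne_zero (pow_ne_zero _ (pathU_det l)) (pow_ne_zero _ (pathU_det m))
  have hmul : ((gridGraph l m).lapMatrix ℝ + Matrix.of fun _ _ => 1) * U =
      U * Matrix.diagonal (gridEig l m) := by
    ext ⟨a, b⟩ ⟨j, k⟩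
    rw [Matrix.mul_diagonal]
    have h1 : (((gridGraph l m).lapMatrix ℝ + Matrix.of fun _ _ => 1) * U :
        Matrix (Fin l × Fin m) (Fin l × Fin m) ℝ) (a, b) (j, k) =
        (((gridGraph l m).lapMatrix ℝ + Matrix.of fun _ _ => 1).mulVec
          (fun v => pathVec l j v.1 * pathVec m k v.2)) (a, b) := rfl
    rw [h1, Matrix.add_mulVec, Pi.add_apply, lap_mulVec]
    have h2 := grid_lap (SimpleGraph.pathGraph l) (SimpleGraph.pathGraph m)
      (fun a => pathVec l j a) (fun b => pathVec m k b) a b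
    rw [path_lap, path_lap] at h2
    have h3 : ((Matrix.of fun (_ _ : Fin l × Fin m) => (1:ℝ)).mulVec
          (fun v => pathVec l j v.1 * pathVec m k v.2)) (a, b) =
          (∑ a : Fin l, pathVec l j a) * ∑ b : Fin m, pathVec m k b := by
      simp only [Matrix.mulVec, dotProduct, Matrix.of_apply, one_mul]
      rw [Fintype.sum_prod_type, Finset.sum_mul_sum]
    rw [h3, pathVec_sum, pathVec_sum]
    refine (congrArg (· + _) h2).trans ?_
    simp only [gridEig, hU, Matrix.kroneckerMap_apply, pathU]
    by_cases hj : (j : ℕ) = 0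
    · by_cases hk : (k : ℕ) = 0
      · simp [hj, hk, pathVec]
      · simp only [hj, hk, if_true, if_false, and_false]; ring
    · simp only [hj, if_false, false_and]; ring
  have := congrArg Matrix.det hmul
  rw [Matrix.det_mul, Matrix.det_mul, Matrix.det_diagonal, mul_comm] at this
  exact mul_left_cancel₀ hdet this

lemma prod_Icc_shift (n : ℕ) (g : ℕ → ℝ) :
    ∏ j ∈ Finset.Icc 1 n, g j = ∏ j : Fin n, g (j + 1) := by
  rw [Fin.prod_univ_eq_prod_range (fun j => g (j + 1)) n, Finset.range_eq_Ico,
    Finset.prod_Ico_add' g 0 n 1]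
  rfl

lemma prod_gridEig (n p : ℕ) : ∏ x, gridEig (n + 1) (p + 1) x =
    (((n + 1 : ℕ) : ℝ) * ((p + 1 : ℕ) : ℝ)) ^ 2 *
      ∏ j : Fin n, ∏ k : Fin p, (pathEig (n + 1) (j + 1) + pathEig (p + 1) (k + 1)) := by
  have h1 := prod_pathEig0 n
  have h2 := prod_pathEig0 p
  rw [← Fin.prod_univ_eq_prod_range (fun j => pathEig (n + 1) (j + 1))] at h1
  rw [← Fin.prod_univ_eq_prod_range (fun j => pathEig (p + 1) (j + 1))] at h2
  have z : ∀ l, pathEig l 0 = 0 := by intro l; simp [pathEig]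
  rw [Fintype.prod_prod_type, Fin.prod_univ_succ]
  simp_rw [Fin.prod_univ_succ (n := p)]
  rw [Finset.prod_mul_distrib]
  simp only [gridEig, Fin.val_zero, Fin.val_succ, z, zero_add, add_zero, Nat.add_eq_zero_iff,
    one_ne_zero, and_false, false_and, if_false, and_self, if_true]
  rw [h1, h2]
  ring

theorem tau_product_formula (l m : ℕ) (hl : 0 < l) (hm : 0 < m) :
    (gridTau l m : ℝ) =
      ∏ j ∈ Finset.Icc 1 (l - 1), ∏ k ∈ Finset.Icc 1 (m - 1),
        (pathEig l j + pathEig m k) := by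
  classical
  obtain ⟨n, rfl⟩ : ∃ n, l = n + 1 := ⟨l - 1, by omega⟩
  obtain ⟨p, rfl⟩ : ∃ p, m = p + 1 := ⟨m - 1, by omega⟩
  have h1 := det_grid (n + 1) (p + 1)
  rw [det_lap_add_one _ ((0, 0) : Fin (n + 1) × Fin (p + 1)), det_lap_add, ← ncard_trees,
    prod_gridEig] at h1
  simp only [Nat.add_sub_cancel]
  rw [prod_Icc_shift]
  simp_rw [prod_Icc_shift]
  have hc : (Fintype.card (Fin (n + 1) × Fin (p + 1)) : ℝ) =
    ((n + 1 : ℕ) : ℝ) * ((p + 1 : ℕ) : ℝ) := by simp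
  rw [hc] at h1
  have hne : (((n + 1 : ℕ) : ℝ) * ((p + 1 : ℕ) : ℝ)) ^ 2 ≠ 0 := by positivity
  exact mul_left_cancel₀ hne h1
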